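/- Let f : X → X be a continuous map on a compact metric space X and let Λ ⊆ X be a compact invariant set with the periodic gluing orbit property. Then every f-invariant Borel probability measure supported on Λ is a weak* limit of periodic measures of f, i.e., P_f(Λ) ⊆ closure(P_p(f)). -/

import Mathlib

open MeasureTheory Filter Topology Set
open scoped ENNReal NNReal

variable {X : Type*} [MetricSpace X] [CompactSpace X] [MeasurableSpace X] [BorelSpace X]

/-- The empirical (time-average) measure `Υ_{n+1}(x) = (1/(n+1)) ∑_{j=0}^{n} δ_{f^j x}`. -/
noncomputable def empMeas (f : X → X) (x : X) (n : ℕ) : Measure X :=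
  ((n + 1 : ℝ≥0∞))⁻¹ • ∑ j ∈ Finset.range (n + 1), Measure.dirac (f^[j] x)

instance empMeas_prob (f : X → X) (x : X) (n : ℕ) : IsProbabilityMeasure (empMeas f x n) := by
  constructor
  simp only [empMeas, Measure.smul_apply, Measure.coe_finset_sum, Finset.sum_apply,
    MeasureTheory.measure_univ, Finset.sum_const, Finset.card_range, nsmul_eq_mul, mul_one,
    smul_eq_mul]
  rw [show ((n : ℝ≥0∞) + 1) = ((n + 1 : ℕ) : ℝ≥0∞) by push_cast; ring,
    ENNReal.inv_mul_cancel] <;> simp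

/-- The empirical measure as a probability measure. -/
noncomputable def empP (f : X → X) (x : X) (n : ℕ) : ProbabilityMeasure X :=
  ⟨empMeas f x n, empMeas_prob f x n⟩

/-- The p-omega-limit set: all weak* limits of subsequences of the empirical measures. -/
def pOmega (f : X → X) (x : X) : Set (ProbabilityMeasure X) :=
  {μ | ∃ φ : ℕ → ℕ, StrictMono φ ∧ Tendsto (fun i => empP f x (φ i)) atTop (𝓝 μ)}

/-- The omega-limit set of a point. -/
def omegaSet (f : X → X) (x : X) : Set X :=
  ⋂ N : ℕ, closure {y | ∃ n ≥ N, f^[n] x = y}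

/-- An invariant probability measure. -/
def InvMeas (f : X → X) (μ : ProbabilityMeasure X) : Prop :=
  ∀ A : Set X, MeasurableSet A → μ.toMeasure (f ⁻¹' A) = μ.toMeasure A

/-- `μ` is physical-like (SRB-like / observable) w.r.t. the reference measure `Leb`:
every weak* neighborhood basin has positive reference measure. -/
def PhysicalLike (f : X → X) (Leb : Measure X) (μ : ProbabilityMeasure X) : Prop :=
  ∀ U ∈ 𝓝 μ, 0 < Leb {x | ∃ ν ∈ pOmega f x, ν ∈ U}

/-- An ε-chain from `a` to `b` with all points inside `A`. -/
def IsEpsChain (f : X → X) (ε : ℝ) (A : Set X) (a b : X) : Prop :=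
  ∃ n : ℕ, 0 < n ∧ ∃ c : ℕ → X, c 0 = a ∧ c n = b ∧ (∀ i ≤ n, c i ∈ A) ∧
    ∀ i < n, dist (f (c i)) (c (i + 1)) < ε

/-- A nonempty compact invariant internally chain transitive set. -/
def InternallyChainTransitive (f : X → X) (A : Set X) : Prop :=
  A.Nonempty ∧ IsCompact A ∧ f '' A ⊆ A ∧ ∀ a ∈ A, ∀ b ∈ A, ∀ ε > 0, IsEpsChain f ε A a b

/-- Periodic shadowing property. -/
def PeriodicShadowing (f : X → X) : Prop :=
  ∀ ε > 0, ∃ δ > 0, ∀ (x : ℕ → X) (T : ℕ), 0 < T →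
    (∀ i, dist (f (x i)) (x (i + 1)) < δ) → (∀ i, x (i + T) = x i) →
    ∃ y : X, (∃ p : ℕ, 0 < p ∧ f^[p] y = y) ∧ ∀ n, dist (f^[n] y) (x n) < ε

/-- The periodic gluing orbit property of `Λ`. -/
def PeriodicGluing (f : X → X) (Λ : Set X) : Prop :=
  ∀ ε > 0, ∃ M : ℕ, ∀ k : ℕ, 0 < k → ∀ (xs : ℕ → X) (ns : ℕ → ℕ),
    (∀ i < k, xs i ∈ Λ) → (∀ i < k, 1 ≤ ns i) →
    ∃ ms : ℕ → ℕ, (∀ i < k, ms i ≤ M) ∧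
      ∃ z : X, f^[∑ j ∈ Finset.range k, (ns j + ms j)] z = z ∧
        ∀ i < k, ∀ l < ns i,
          dist (f^[(∑ j ∈ Finset.range i, (ns j + ms j)) + l] z) (f^[l] (xs i)) < ε

/-- The set of periodic measures (uniform measures on periodic orbits). -/
def periodicMeasures (f : X → X) : Set (ProbabilityMeasure X) :=
  {μ | ∃ z : X, ∃ m : ℕ, f^[m + 1] z = z ∧ μ = empP f z m}

/-- The topological support of a measure. -/
def mSupport (μ : Measure X) : Set X := {y | ∀ U ∈ 𝓝 y, 0 < μ U}

/-- Almost every i.i.d. sample of `μ` yields a sequence in `Λ` along which the averages of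
countably many integrable functions converge to their integrals. -/
theorem exists_seq_tendsto_average {Ω ι : Type*} [MeasurableSpace Ω] [Countable ι]
    (μ : Measure Ω) [IsProbabilityMeasure μ] {Λ : Set Ω} (hΛ : ∀ᵐ x ∂μ, x ∈ Λ)
    (Y : ι → Ω → ℝ) (hYm : ∀ i, Measurable (Y i)) (hYi : ∀ i, Integrable (Y i) μ) :
    ∃ xs : ℕ → Ω, (∀ n, xs n ∈ Λ) ∧ ∀ i,
      Tendsto (fun n : ℕ => (∑ j ∈ Finset.range n, Y i (xs j)) / n) atTop (𝓝 (∫ x, Y i x ∂μ)) := by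
  obtain ⟨Ω', _, P, ξ, hξm, hξl, hξi, _⟩ := ProbabilityTheory.exists_iid ℕ μ
  have hmem : ∀ᵐ ω ∂P, ∀ n, ξ n ω ∈ Λ := by
    refine ae_all_iff.2 fun n => ?_
    have h := hΛ
    rw [← (hξl n).map_eq] at h
    exact ae_of_ae_map (hξm n).aemeasurable h
  have hlim : ∀ᵐ ω ∂P, ∀ i, Tendsto (fun n : ℕ => (∑ j ∈ Finset.range n, Y i (ξ j ω)) / n)
      atTop (𝓝 (∫ x, Y i x ∂μ)) := by
    refine ae_all_iff.2 fun i => ?_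
    have hint : ∫ x, Y i x ∂μ = ∫ ω, Y i (ξ 0 ω) ∂P := by
      rw [← (hξl 0).map_eq, integral_map (hξm 0).aemeasurable (hYm i).aestronglyMeasurable]
    rw [hint]
    refine ProbabilityTheory.strong_law_ae_real (fun n ω => Y i (ξ n ω)) ?_ ?_ ?_
    · have h := hYi i
      rw [← (hξl 0).map_eq] at h
      exact h.comp_measurable (hξm 0)
    · intro m n hmn
      exact (hξi.indepFun hmn).comp (hYm i) (hYm i)
    · intro n
      refine ProbabilityTheory.IdentDistrib.comp (u := Y i) ⟨(hξm n).aemeasurable,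
        (hξm 0).aemeasurable, ?_⟩ (hYm i)
      rw [(hξl n).map_eq, (hξl 0).map_eq]
  obtain ⟨ω, h₁, h₂⟩ := (hmem.and hlim).exists
  exact ⟨fun n => ξ n ω, h₁, h₂⟩

/-- The sum of a bounded sequence over concatenated blocks of length `N` separated by gaps is
close to the sum of the block entries that the sequence approximates. -/
theorem abs_sum_blocks_sub_le {a : ℕ → ℝ} {b : ℕ → ℕ → ℝ} {N k : ℕ} {ms : ℕ → ℕ} {ε B : ℝ}
    (ha : ∀ i, |a i| ≤ B)
    (hab : ∀ i < k, ∀ l < N, |a ((∑ j ∈ Finset.range i, (N + ms j)) + l) - b i l| ≤ ε) :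
    |∑ i ∈ Finset.range (∑ j ∈ Finset.range k, (N + ms j)), a i
      - ∑ j ∈ Finset.range k, ∑ l ∈ Finset.range N, b j l|
      ≤ k * N * ε + (∑ j ∈ Finset.range k, (ms j : ℝ)) * B := by
  induction k with
  | zero => simp
  | succ k ih =>
    have ih := ih fun i hi => hab i (by omega)
    simp only [Finset.sum_range_succ _ k]
    set p := ∑ j ∈ Finset.range k, (N + ms j)
    have hblock : |∑ l ∈ Finset.range N, a (p + l) - ∑ l ∈ Finset.range N, b k l| ≤ N * ε := by
      rw [← Finset.sum_sub_distrib]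
      refine (Finset.abs_sum_le_sum_abs _ _).trans ?_
      simpa using Finset.sum_le_card_nsmul (Finset.range N) _ ε fun l hl =>
        hab k (by omega) l (Finset.mem_range.1 hl)
    have hgap : |∑ l ∈ Finset.range (ms k), a (p + (N + l))| ≤ ms k * B := by
      refine (Finset.abs_sum_le_sum_abs _ _).trans ?_
      simpa using Finset.sum_le_card_nsmul (Finset.range (ms k)) _ B fun l _ => ha (p + (N + l))
    rw [Finset.sum_range_add, Finset.sum_range_add]
    push_cast
    rw [abs_le] at *
    constructor <;> linarith [ih.1, ih.2, hblock.1, hblock.2, hgap.1, hgap.2]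

/-- The averages of a bounded sequence over concatenated blocks differ little from those of the
approximated block entries, once the blocks are long compared with the gaps. -/
theorem abs_average_blocks_sub_le {a : ℕ → ℝ} {b : ℕ → ℕ → ℝ} {N k M : ℕ} {ms : ℕ → ℕ} {ε B : ℝ}
    (hN : 0 < N) (hk : 0 < k) (ha : ∀ i, |a i| ≤ B) (hb : ∀ i l, |b i l| ≤ B)
    (hms : ∀ i < k, ms i ≤ M) (hMN : 2 * M * B ≤ N * ε)
    (hab : ∀ i < k, ∀ l < N, |a ((∑ j ∈ Finset.range i, (N + ms j)) + l) - b i l| ≤ ε) :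
    |(∑ i ∈ Finset.range (∑ j ∈ Finset.range k, (N + ms j)), a i)
        / (∑ j ∈ Finset.range k, (N + ms j) : ℕ)
      - (∑ j ∈ Finset.range k, ∑ l ∈ Finset.range N, b j l) / k / N| ≤ 2 * ε := by
  have hsum := abs_sum_blocks_sub_le ha hab
  have hB : 0 ≤ B := (abs_nonneg _).trans (ha 0)
  have hε : 0 ≤ ε := (abs_nonneg _).trans (hab 0 hk 0 hN)
  have hS : |∑ j ∈ Finset.range k, ∑ l ∈ Finset.range N, b j l| ≤ k * N * B := by
    refine (Finset.abs_sum_le_sum_abs _ _).trans ?_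
    have h : ∀ j, |∑ l ∈ Finset.range N, b j l| ≤ N * B := fun j => by
      refine (Finset.abs_sum_le_sum_abs _ _).trans ?_
      simpa using Finset.sum_le_card_nsmul (Finset.range N) _ B fun l _ => hb j l
    simpa [mul_assoc] using Finset.sum_le_card_nsmul (Finset.range k) _ (N * B) fun j _ => h j
  have hG : ∑ j ∈ Finset.range k, (ms j : ℝ) ≤ k * M := by
    simpa using Finset.sum_le_card_nsmul (Finset.range k) (fun j => (ms j : ℝ)) M fun j hj => by
      exact_mod_cast hms j (Finset.mem_range.1 hj)
  have hP : ((∑ j ∈ Finset.range k, (N + ms j) : ℕ) : ℝ)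
      = k * N + ∑ j ∈ Finset.range k, (ms j : ℝ) := by
    simp [Finset.sum_add_distrib]
  rw [hP]
  have hG₀ : 0 ≤ ∑ j ∈ Finset.range k, (ms j : ℝ) := by positivity
  generalize ∑ i ∈ Finset.range (∑ j ∈ Finset.range k, (N + ms j)), a i = T at *
  generalize ∑ j ∈ Finset.range k, ∑ l ∈ Finset.range N, b j l = S at *
  generalize ∑ j ∈ Finset.range k, (ms j : ℝ) = G at *
  have hN' : (0 : ℝ) < N := by exact_mod_cast hN
  have hk' : (0 : ℝ) < k := by exact_mod_cast hk
  have hkN : (0 : ℝ) < k * N := by positivity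
  have hQ : 0 < (k * N + G : ℝ) := by positivity
  obtain ⟨s, rfl⟩ : ∃ s, S = k * N * s := ⟨S / (k * N), by field_simp⟩
  have hs : |s| ≤ B := by
    rw [abs_mul, abs_of_pos hkN] at hS
    exact le_of_mul_le_mul_left hS hkN
  have hGs : |G * s| ≤ G * B := by
    rw [abs_mul, abs_of_nonneg hG₀]
    gcongr
  have hGB : 2 * (G * B) ≤ k * N * ε := by
    calc 2 * (G * B) ≤ 2 * (k * M * B) := by gcongr
      _ = k * (2 * M * B) := by ring
      _ ≤ k * (N * ε) := by gcongr
      _ = k * N * ε := by ring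
  have key : |T - (k * N + G) * s| ≤ 2 * ε * (k * N + G) := by
    have h₀ : 0 ≤ ε * G := by positivity
    rw [abs_le] at *
    constructor <;> nlinarith
  have heq : T / (k * N + G) - k * N * s / k / N = (T - (k * N + G) * s) / (k * N + G) := by
    field_simp
  rw [heq, abs_div, abs_of_pos hQ, div_le_iff₀ hQ]
  exact key

theorem integral_empP (f : X → X) (z : X) (m : ℕ) {φ : X → ℝ} (hφ : Continuous φ) :
    ∫ x, φ x ∂(empP f z m : Measure X)
      = (∑ i ∈ Finset.range (m + 1), φ (f^[i] z)) / (m + 1 : ℕ) := by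
  change ∫ x, φ x ∂(empMeas f z m) = _
  rw [empMeas, integral_smul_measure, integral_finsetSum_measure]
  · simp only [integral_dirac, smul_eq_mul, ENNReal.toReal_inv]
    rw [show ((m : ℝ≥0∞) + 1) = ((m + 1 : ℕ) : ℝ≥0∞) by push_cast; ring, ENNReal.toReal_natCast]
    field_simp
  · intro i _
    exact hφ.integrable_of_hasCompactSupport (HasCompactSupport.of_compactSpace φ)

theorem integral_comp_iterate_of_measurePreserving {Ω : Type*} [MeasurableSpace Ω]
    {μ : Measure Ω} {f : Ω → Ω} (hf : MeasurePreserving f μ μ) {φ : Ω → ℝ} (hφ : Measurable φ)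
    (n : ℕ) : ∫ x, φ (f^[n] x) ∂μ = ∫ x, φ x ∂μ := by
  have h := hf.iterate n
  conv_rhs => rw [← h.map_eq]
  rw [integral_map h.measurable.aemeasurable hφ.aestronglyMeasurable]

/-- Finitely many integrals against an invariant measure on a set with the periodic gluing orbit
property are approximated simultaneously by those against a periodic measure. -/
theorem exists_periodicMeasures_abs_integral_sub_le {f : X → X} (hf : Continuous f) {Λ : Set X}
    (hglue : PeriodicGluing f Λ) {μ : ProbabilityMeasure X} (hμ : InvMeas f μ)
    (hΛ : ∀ᵐ x ∂(μ : Measure X), x ∈ Λ) (F : Finset (BoundedContinuousFunction X ℝ))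
    {ε : ℝ} (hε : 0 < ε) :
    ∃ ν ∈ periodicMeasures f, ∀ φ ∈ F,
      |∫ x, φ x ∂(ν : Measure X) - ∫ x, φ x ∂(μ : Measure X)| ≤ 3 * ε := by
  have hmp : MeasurePreserving f (μ : Measure X) μ := by
    refine ⟨hf.measurable, Measure.ext fun A hA => ?_⟩
    rw [Measure.map_apply hf.measurable hA]
    exact hμ A hA
  obtain ⟨δ, hδ, hφδ⟩ : ∃ δ > 0, ∀ φ ∈ F, ∀ x y, dist x y < δ → |φ x - φ y| ≤ ε := by
    have h : ∀ᶠ δ in 𝓝[>] (0 : ℝ), ∀ φ ∈ F, ∀ x y, dist x y < δ → |φ x - φ y| ≤ ε := by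
      refine (Filter.eventually_all_finset F).2 fun φ _ => ?_
      obtain ⟨δ, hδ, h⟩ := Metric.uniformContinuous_iff.1
        (CompactSpace.uniformContinuous_of_continuous φ.continuous) ε hε
      filter_upwards [Ioo_mem_nhdsGT hδ] with δ' hδ' x y hxy
      exact (h (hxy.trans hδ'.2)).le
    obtain ⟨δ, h, hδ⟩ := (h.and self_mem_nhdsWithin).exists
    exact ⟨δ, hδ, h⟩
  obtain ⟨B, hB⟩ : ∃ B : ℝ, ∀ φ ∈ F, ∀ x, |φ x| ≤ B := by
    refine ⟨∑ φ ∈ F, ‖φ‖, fun φ hφ x => (φ.norm_coe_le_norm x).trans ?_⟩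
    exact Finset.single_le_sum (f := fun φ : BoundedContinuousFunction X ℝ => ‖φ‖)
      (fun _ _ => norm_nonneg _) hφ
  obtain ⟨M, hM⟩ := hglue δ hδ
  obtain ⟨N, hN⟩ := exists_nat_gt (max 0 (2 * M * B / ε))
  have hN₀ : (0 : ℝ) < N := (le_max_left _ _).trans_lt hN
  have hMN : 2 * M * B ≤ N * ε := ((div_lt_iff₀ hε).1 ((le_max_right _ _).trans_lt hN)).le
  have hN₁ : 0 < N := by exact_mod_cast hN₀
  have hint : ∀ φ : X → ℝ, Continuous φ → Integrable φ (μ : Measure X) := fun φ hφ =>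
    hφ.integrable_of_hasCompactSupport (HasCompactSupport.of_compactSpace φ)
  have hcont : ∀ φ : F, Continuous fun x => ∑ l ∈ Finset.range N, φ.1 (f^[l] x) := fun φ =>
    continuous_finsetSum _ fun l _ => φ.1.continuous.comp (hf.iterate l)
  obtain ⟨xs, hxs, hlim⟩ := exists_seq_tendsto_average (μ : Measure X) hΛ
    (fun (φ : F) x => ∑ l ∈ Finset.range N, φ.1 (f^[l] x)) (fun φ => (hcont φ).measurable)
    (fun φ => hint _ (hcont φ))
  have hev : ∀ φ : F, ∀ᶠ k : ℕ in atTop,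
      |(∑ j ∈ Finset.range k, ∑ l ∈ Finset.range N, φ.1 (f^[l] (xs j))) / k / N
        - ∫ x, φ.1 x ∂(μ : Measure X)| < ε := by
    intro φ
    have h := (hlim φ).div_const (N : ℝ)
    rw [integral_finsetSum _ fun l _ =>
      hint (fun x => φ.1 (f^[l] x)) (φ.1.continuous.comp (hf.iterate l))] at h
    simp only [integral_comp_iterate_of_measurePreserving hmp φ.1.continuous.measurable,
      Finset.sum_const, Finset.card_range, nsmul_eq_mul, mul_div_cancel_left₀ _ hN₀.ne'] at h
    exact Metric.tendsto_nhds.1 h ε hε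
  obtain ⟨k, hk, hk₀⟩ := ((eventually_all.2 hev).and (eventually_gt_atTop 0)).exists
  obtain ⟨ms, hms, z, hz, hsh⟩ := hM k hk₀ xs (fun _ => N) (fun i _ => hxs i) fun _ _ => hN₁
  obtain ⟨m, hm⟩ : ∃ m, ∑ j ∈ Finset.range k, (N + ms j) = m + 1 := by
    refine Nat.exists_eq_add_one.2 (Finset.sum_pos (fun _ _ => by omega) ?_)
    simpa using hk₀.ne'
  refine ⟨empP f z m, ⟨z, m, hm ▸ hz, rfl⟩, fun φ hφ => ?_⟩
  have h₁ := abs_average_blocks_sub_le (a := fun i => φ (f^[i] z))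
    (b := fun j l => φ (f^[l] (xs j))) hN₁ hk₀ (fun i => hB φ hφ _) (fun _ _ => hB φ hφ _) hms hMN
    fun i hi l hl => hφδ φ hφ _ _ (hsh i hi l hl)
  have h₂ := hk ⟨φ, hφ⟩
  rw [hm] at h₁
  rw [integral_empP f z m φ.continuous]
  refine (abs_sub_le _ _ _).trans ((add_le_add h₁ h₂.le).trans ?_)
  linarith

/-- If `Λ` is compact, invariant and has the periodic gluing orbit property, then every
invariant probability measure supported on `Λ` is a weak* limit of periodic measures. -/
theorem gluing_periodic_approximation (f : X → X) (hf : Continuous f) (Λ : Set X)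
    (hΛc : IsCompact Λ) (hΛinv : f '' Λ ⊆ Λ) (hglue : PeriodicGluing f Λ) :
    ∀ μ : ProbabilityMeasure X, InvMeas f μ → μ.toMeasure Λ = 1 →
      μ ∈ closure (periodicMeasures f) := by
  classical
  intro μ hμ hμΛ
  have hΛ : ∀ᵐ x ∂(μ : Measure X), x ∈ Λ :=
    (mem_ae_iff_prob_eq_one hΛc.measurableSet).2 hμΛ
  choose ν hν hνμ using fun (F : Finset (BoundedContinuousFunction X ℝ)) (n : ℕ) =>
    exists_periodicMeasures_abs_integral_sub_le hf hglue hμ hΛ F (Nat.one_div_pos_of_nat (n := n))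
  refine mem_closure_of_tendsto (b := atTop)
    (f := fun q : Finset (BoundedContinuousFunction X ℝ) × ℕ => ν q.1 q.2) ?_
    (Eventually.of_forall fun q => hν q.1 q.2)
  refine ProbabilityMeasure.tendsto_iff_forall_integral_tendsto.2 fun φ => ?_
  rw [tendsto_iff_dist_tendsto_zero]
  have hlim : Tendsto (fun q : Finset (BoundedContinuousFunction X ℝ) × ℕ =>
      3 * (1 / ((q.2 : ℝ) + 1))) atTop (𝓝 0) := by
    rw [← prod_atTop_atTop_eq]
    simpa [Function.comp_def] using
      (tendsto_one_div_add_atTop_nhds_zero_nat.const_mul (3 : ℝ)).comp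
        tendsto_snd
  refine squeeze_zero' (Eventually.of_forall fun _ => dist_nonneg) ?_ hlim
  filter_upwards [eventually_ge_atTop ({φ}, 0)] with q hq
  exact hνμ q.1 q.2 φ (hq.1 (Finset.mem_singleton_self φ))
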